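/- Let P be the path graph on vertices 1, 2, …, n (vertex i adjacent to i+1 for 1 ≤ i ≤ n−1), with both the input and a single sensor placed at the end vertex 1. Let w and w' be two weight functions for P. If [𝓛(w)^k]_{1,1} = [𝓛(w')^k]_{1,1} for every natural number k (equality of all Markov parameters measured at node 1), then w = w'. That is, a single sensor co-located with the input at an end node of a path graph suffices to identify all edge weights. -/

import Mathlib

/-!
Let `A = 𝓛(w)`, a Jacobi matrix, and let `K` be its Krylov matrix with columns `A^j e_0`. Since `A`
is symmetric, `(Kᵀ K) i j = [A^(i+j)]_{0,0}`, so the Markov parameters determine `Kᵀ K`. Along the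
path each application of `A` reaches exactly one new vertex, with a positive coefficient: `K` is
upper triangular with positive diagonal, hence it is the Cholesky factor of `Kᵀ K` and is itself
determined. The edge weights are the ratios of consecutive diagonal entries of `K`. On `n` vertices
only the powers up to `2 n - 2` enter.
-/

open Finset

/-- A weight function for the simple graph `G`: symmetric, positive exactly on
adjacent pairs, zero otherwise (and zero on the diagonal). -/
def IsWeightFn {V : Type*} (G : SimpleGraph V) (w : V → V → ℝ) : Prop :=
  (∀ u v, w u v = w v u) ∧
  (∀ u v, G.Adj u v → 0 < w u v) ∧
  (∀ u v, u ≠ v → ¬ G.Adj u v → w u v = 0) ∧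
  (∀ v, w v v = 0)

/-- The state matrix `𝓛(w)` (the negative of the weighted Laplacian):
`[𝓛(w)]_{u,v} = w(u,v)` for `u ≠ v`, and `[𝓛(w)]_{v,v} = -∑_{u ≠ v} w(v,u)`. -/
def stateMatrix {V : Type*} [Fintype V] [DecidableEq V] (w : V → V → ℝ) :
    Matrix V V ℝ :=
  Matrix.of fun u v => if u = v then -(∑ x ∈ Finset.univ.erase v, w v x) else w u v

open scoped Matrix

section Cholesky

variable {m R : Type*} [Fintype m] [LinearOrder m]

lemma isDiag_of_isUpperTriangular_of_transpose_mul_self_eq_one [CommRing R] {Q : Matrix m m R}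
    (hQ : Q.IsUpperTriangular) (horth : Qᵀ * Q = 1) : Q.IsDiag := by
  have hinv : Q⁻¹ = Qᵀ := Matrix.inv_eq_left_inv horth
  let _ : Invertible Q := invertibleOfLeftInverse Q Qᵀ horth
  have hQt : Qᵀ.IsUpperTriangular := hinv ▸ Matrix.blockTriangular_inv_of_blockTriangular hQ
  intro i j hij
  rcases hij.lt_or_gt with hlt | hgt
  · exact hQt hlt
  · exact hQ hgt

variable [Field R] [LinearOrder R] [IsStrictOrderedRing R]

lemma eq_of_transpose_mul_self_eq_of_isUpperTriangular {K L : Matrix m m R}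
    (hK : K.IsUpperTriangular) (hL : L.IsUpperTriangular)
    (hKpos : ∀ i, 0 < K i i) (hLpos : ∀ i, 0 < L i i) (hgram : Kᵀ * K = Lᵀ * L) : K = L := by
  have hdet : IsUnit L.det := by
    rw [Matrix.det_of_isUpperTriangular hL]
    exact (Finset.prod_pos fun i _ => hLpos i).ne'.isUnit
  let _ : Invertible L := Matrix.invertibleOfIsUnitDet L hdet
  have hQ : (K * L⁻¹).IsUpperTriangular :=
    hK.mul (Matrix.blockTriangular_inv_of_blockTriangular hL)
  have horth : (K * L⁻¹)ᵀ * (K * L⁻¹) = 1 := by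
    calc (K * L⁻¹)ᵀ * (K * L⁻¹) = (L⁻¹)ᵀ * (Kᵀ * K) * L⁻¹ := by
          simp only [Matrix.transpose_mul, Matrix.mul_assoc]
      _ = (L * L⁻¹)ᵀ * (L * L⁻¹) := by
          simp only [hgram, Matrix.transpose_mul, Matrix.mul_assoc]
      _ = 1 := by simp
  obtain ⟨d, hd⟩ : ∃ d, Matrix.diagonal d = K * L⁻¹ := ⟨_,
    (isDiag_of_isUpperTriangular_of_transpose_mul_self_eq_one hQ horth).diagonal_diag⟩
  have hKL : K = Matrix.diagonal d * L := by
    rw [hd, Matrix.inv_mul_cancel_right_of_invertible]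
  have hd_pos (i : m) : 0 < d i := by
    have hKi : 0 < d i * L i i := by simpa [hKL] using hKpos i
    exact pos_of_mul_pos_left hKi (hLpos i).le
  have hd_sq (i : m) : d i * d i = 1 := by
    simpa [← hd] using congr_fun₂ horth i i
  have hd_one : d = 1 := funext fun i =>
    (mul_self_eq_one_iff.mp (hd_sq i)).resolve_right (by linarith [hd_pos i])
  rw [hKL, hd_one, Matrix.diagonal_one', Matrix.one_mul]

end Cholesky

section Krylov

variable {V R : Type*} [Fintype V] [DecidableEq V]

/-- The Krylov matrix of `A` at the basis vector `e_o`, with columns `e_o, A e_o, …, A^(n-1) e_o`;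
the vector `A^j e_o` is written as column `o` of `A^j`. -/
def krylovMatrix [Semiring R] (n : ℕ) (A : Matrix V V R) (o : V) : Matrix V (Fin n) R :=
  Matrix.of fun i j => (A ^ (j : ℕ)) i o

lemma krylovMatrix_apply [Semiring R] (n : ℕ) (A : Matrix V V R) (o i : V) (j : Fin n) :
    krylovMatrix n A o i j = (A ^ (j : ℕ)) i o := rfl

lemma krylovMatrix_transpose_mul_self_apply [CommSemiring R] {A : Matrix V V R} (hA : A.IsSymm)
    (n : ℕ) (o : V) (i j : Fin n) :
    ((krylovMatrix n A o)ᵀ * krylovMatrix n A o) i j = (A ^ (i + j : ℕ)) o o := by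
  simp only [Matrix.mul_apply, Matrix.transpose_apply, krylovMatrix_apply, pow_add,
    (hA.pow i).apply o]

end Krylov

/-- A square matrix is upper Hessenberg if it vanishes below the first subdiagonal. -/
def IsUpperHessenberg {n : ℕ} {R : Type*} [Zero R] (A : Matrix (Fin n) (Fin n) R) : Prop :=
  ∀ ⦃i j : Fin n⦄, (j : ℕ) + 1 < i → A i j = 0

namespace IsUpperHessenberg

variable {n : ℕ} {R : Type*} [Semiring R] {A : Matrix (Fin (n + 1)) (Fin (n + 1)) R}

lemma pow_apply_zero_eq_zero (hA : IsUpperHessenberg A) {k : ℕ} {i : Fin (n + 1)}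
    (hki : k < i) : (A ^ k) i 0 = 0 := by
  induction k generalizing i with
  | zero =>
    have hi : i ≠ 0 := Fin.pos_iff_ne_zero.mp hki
    rw [pow_zero, Matrix.one_apply_ne hi]
  | succ k ih =>
    rw [pow_succ', Matrix.mul_apply]
    refine Finset.sum_eq_zero fun l _ => ?_
    rcases lt_or_ge k (l : ℕ) with hkl | hlk
    · rw [ih hkl, mul_zero]
    · rw [hA (by omega), zero_mul]

lemma pow_succ_apply_succ_zero (hA : IsUpperHessenberg A) (i : Fin n) :
    (A ^ (i + 1 : ℕ)) i.succ 0 = A i.succ i.castSucc * (A ^ (i : ℕ)) i.castSucc 0 := by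
  rw [pow_succ', Matrix.mul_apply]
  refine Finset.sum_eq_single_of_mem _ (Finset.mem_univ _) fun l _ hl => ?_
  rcases hl.lt_or_gt with hlt | hgt
  · rw [hA (Nat.succ_lt_succ hlt), zero_mul]
  · have hil : (i : ℕ) < l := hgt
    rw [hA.pow_apply_zero_eq_zero hil, mul_zero]

lemma krylovMatrix_isUpperTriangular (hA : IsUpperHessenberg A) :
    (krylovMatrix (n + 1) A 0).IsUpperTriangular :=
  fun _ _ hji => hA.pow_apply_zero_eq_zero hji

end IsUpperHessenberg

/-- A Jacobi matrix: symmetric and tridiagonal with positive off-diagonal entries. By symmetry it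
is enough to ask for the zeros and the signs below the diagonal. -/
structure IsJacobi {n : ℕ} {R : Type*} [Zero R] [LT R]
    (A : Matrix (Fin (n + 1)) (Fin (n + 1)) R) : Prop where
  isSymm : A.IsSymm
  isUpperHessenberg : IsUpperHessenberg A
  subdiag_pos (i : Fin n) : 0 < A i.succ i.castSucc

namespace IsJacobi

variable {n : ℕ} {R : Type*}

lemma krylovMatrix_diag_pos [Semiring R] [PartialOrder R] [IsStrictOrderedRing R]
    {A : Matrix (Fin (n + 1)) (Fin (n + 1)) R} (hA : IsJacobi A) (i : Fin (n + 1)) :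
    0 < krylovMatrix (n + 1) A 0 i i := by
  induction i using Fin.induction with
  | zero => simp [krylovMatrix_apply]
  | succ i ih =>
    rw [krylovMatrix_apply, Fin.val_succ, hA.isUpperHessenberg.pow_succ_apply_succ_zero]
    exact mul_pos (hA.subdiag_pos i) ih

variable [Field R] [LinearOrder R] [IsStrictOrderedRing R]
  {A B : Matrix (Fin (n + 1)) (Fin (n + 1)) R}

lemma krylovMatrix_eq_of_pow_apply_zero_eq (hA : IsJacobi A) (hB : IsJacobi B)
    (h : ∀ k ≤ 2 * n, (A ^ k) 0 0 = (B ^ k) 0 0) :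
    krylovMatrix (n + 1) A 0 = krylovMatrix (n + 1) B 0 := by
  refine eq_of_transpose_mul_self_eq_of_isUpperTriangular
    hA.isUpperHessenberg.krylovMatrix_isUpperTriangular
    hB.isUpperHessenberg.krylovMatrix_isUpperTriangular
    hA.krylovMatrix_diag_pos hB.krylovMatrix_diag_pos ?_
  ext i j
  rw [krylovMatrix_transpose_mul_self_apply hA.isSymm,
    krylovMatrix_transpose_mul_self_apply hB.isSymm, h _ (by omega)]

lemma subdiag_eq_of_pow_apply_zero_eq (hA : IsJacobi A) (hB : IsJacobi B)
    (h : ∀ k ≤ 2 * n, (A ^ k) 0 0 = (B ^ k) 0 0) (i : Fin n) :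
    A i.succ i.castSucc = B i.succ i.castSucc := by
  have hdiag (j : Fin (n + 1)) : (A ^ (j : ℕ)) j 0 = (B ^ (j : ℕ)) j 0 :=
    congr_fun₂ (hA.krylovMatrix_eq_of_pow_apply_zero_eq hB h) j j
  have hprev : (A ^ (i : ℕ)) i.castSucc 0 = (B ^ (i : ℕ)) i.castSucc 0 := hdiag i.castSucc
  have hpos : 0 < (A ^ (i : ℕ)) i.castSucc 0 := hA.krylovMatrix_diag_pos i.castSucc
  refine mul_right_cancel₀ hpos.ne' ?_
  calc A i.succ i.castSucc * (A ^ (i : ℕ)) i.castSucc 0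
      = (A ^ (i + 1 : ℕ)) i.succ 0 := (hA.isUpperHessenberg.pow_succ_apply_succ_zero i).symm
    _ = (B ^ (i + 1 : ℕ)) i.succ 0 := hdiag i.succ
    _ = B i.succ i.castSucc * (B ^ (i : ℕ)) i.castSucc 0 :=
        hB.isUpperHessenberg.pow_succ_apply_succ_zero i
    _ = B i.succ i.castSucc * (A ^ (i : ℕ)) i.castSucc 0 := by rw [hprev]

end IsJacobi

section StateMatrix

variable {V : Type*} [Fintype V] [DecidableEq V] {w : V → V → ℝ}

lemma stateMatrix_apply_of_ne {u v : V} (huv : u ≠ v) : stateMatrix w u v = w u v := by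
  simp [stateMatrix, huv]

lemma stateMatrix_isSymm (hw : ∀ u v, w u v = w v u) : (stateMatrix w).IsSymm := by
  refine Matrix.IsSymm.ext fun u v => ?_
  rcases eq_or_ne u v with rfl | huv
  · rfl
  · rw [stateMatrix_apply_of_ne huv, stateMatrix_apply_of_ne huv.symm, hw]

end StateMatrix

namespace IsWeightFn

variable {n : ℕ} {w w' : Fin (n + 1) → Fin (n + 1) → ℝ}

lemma isJacobi_stateMatrix (hw : IsWeightFn (SimpleGraph.pathGraph (n + 1)) w) :
    IsJacobi (stateMatrix w) := by
  obtain ⟨hsymm, hpos, hzero, -⟩ := hw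
  refine ⟨stateMatrix_isSymm hsymm, fun i j hji => ?_, fun i => ?_⟩
  · have hij : i ≠ j := by rintro rfl; omega
    rw [stateMatrix_apply_of_ne hij]
    exact hzero i j hij (by rw [SimpleGraph.pathGraph_adj]; omega)
  · rw [stateMatrix_apply_of_ne i.castSucc_lt_succ.ne']
    exact hpos _ _ (SimpleGraph.pathGraph_adj.mpr (Or.inr rfl))

lemma eq_of_pathGraph_edges (hw : IsWeightFn (SimpleGraph.pathGraph (n + 1)) w)
    (hw' : IsWeightFn (SimpleGraph.pathGraph (n + 1)) w')
    (h : ∀ i : Fin n, w i.succ i.castSucc = w' i.succ i.castSucc) : w = w' := by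
  obtain ⟨hsymm, -, hzero, hdiag⟩ := hw
  obtain ⟨hsymm', -, hzero', hdiag'⟩ := hw'
  have hedge {u v : Fin (n + 1)} (huv : (v : ℕ) + 1 = u) : w u v = w' u v := by
    have hv : (v : ℕ) < n := by omega
    obtain rfl : u = Fin.succ ⟨v, hv⟩ := Fin.ext huv.symm
    exact h ⟨v, hv⟩
  ext u v
  rcases eq_or_ne u v with rfl | huv
  · rw [hdiag, hdiag']
  by_cases hadj : (SimpleGraph.pathGraph (n + 1)).Adj u v
  · rcases SimpleGraph.pathGraph_adj.mp hadj with hlt | hgt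
    · rw [hsymm, hsymm', hedge hlt]
    · exact hedge hgt
  · rw [hzero u v huv hadj, hzero' u v huv hadj]

end IsWeightFn

theorem path_graph_identifiable_from_end_sensor_general {n : ℕ}
    {w w' : Fin (n + 1) → Fin (n + 1) → ℝ}
    (hw : IsWeightFn (SimpleGraph.pathGraph (n + 1)) w)
    (hw' : IsWeightFn (SimpleGraph.pathGraph (n + 1)) w')
    (h : ∀ k ≤ 2 * n, (stateMatrix w ^ k) 0 0 = (stateMatrix w' ^ k) 0 0) :
    w = w' := by
  refine hw.eq_of_pathGraph_edges hw' fun i => ?_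
  have hne : i.succ ≠ i.castSucc := i.castSucc_lt_succ.ne'
  rw [← stateMatrix_apply_of_ne (w := w) hne, ← stateMatrix_apply_of_ne (w := w') hne]
  exact hw.isJacobi_stateMatrix.subdiag_eq_of_pow_apply_zero_eq hw'.isJacobi_stateMatrix h i

theorem path_graph_identifiable_from_end_sensor
    (n : ℕ) (hn : 0 < n)
    (w w' : Fin n → Fin n → ℝ)
    (hw : IsWeightFn (SimpleGraph.pathGraph n) w)
    (hw' : IsWeightFn (SimpleGraph.pathGraph n) w')
    (h : ∀ k : ℕ, (stateMatrix w ^ k) ⟨0, hn⟩ ⟨0, hn⟩ =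
      (stateMatrix w' ^ k) ⟨0, hn⟩ ⟨0, hn⟩) :
    w = w' := by
  obtain ⟨m, rfl⟩ := Nat.exists_eq_succ_of_ne_zero hn.ne'
  exact path_graph_identifiable_from_end_sensor_general hw hw' fun k _ => h k
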